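/- There exists an additive valuation v over a set M of 15 items for which the AnyPrice share at entitlement 1/3 strictly exceeds the maximin share for 3 agents: specifically, for the additive valuation whose multiset of item values is {5, 5, 5, 7, 7, 7, 11, 17, 23, 23, 23, 31, 31, 31, 65}, one has APS(1/3, v, M) = 97 while MMS_3(v, M) ≤ 96, and hence APS(1/3, v, M) > MMS_3(v, M) = Pessimistic(1/3, v, M). -/

import Mathlib

open Finset

def IsPartition {ι : Type*} [DecidableEq ι] (M : Finset ι) {n : ℕ} (A : Fin n → Finset ι) : Prop :=
  (∀ i, A i ⊆ M) ∧ (∀ i j, i ≠ j → Disjoint (A i) (A j)) ∧ ∀ x ∈ M, ∃ i, x ∈ A i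

/-- The AnyPrice share (price-based definition): the minimum over all nonnegative
price vectors summing to 1 of the best value of an affordable bundle. -/
noncomputable def APS {ι : Type*} (b : ℝ) (v : Finset ι → ℝ) (M : Finset ι) : ℝ :=
  sInf {t : ℝ | ∃ p : ι → ℝ, (∀ j ∈ M, 0 ≤ p j) ∧ (∑ j ∈ M, p j) = 1 ∧
    t = sSup {u : ℝ | ∃ S, S ⊆ M ∧ (∑ j ∈ S, p j) ≤ b ∧ u = v S}}

/-- The maximin share for `n` agents: the maximum over partitions of `M` into `n`
bundles of the minimum bundle value. -/
noncomputable def MMS {ι : Type*} [DecidableEq ι] (n : ℕ) (v : Finset ι → ℝ) (M : Finset ι) : ℝ :=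
  sSup {t : ℝ | ∃ A : Fin n → Finset ι, IsPartition M A ∧ ∀ i, t ≤ v (A i)}

/-- The pessimistic share: the maximum ℓ-out-of-d share over all positive integers
`l, d` with `l / d ≤ b`. -/
noncomputable def Pessimistic {ι : Type*} [DecidableEq ι] (b : ℝ) (v : Finset ι → ℝ) (M : Finset ι) : ℝ :=
  sSup {t : ℝ | ∃ l d : ℕ, 0 < l ∧ 0 < d ∧ (l : ℝ) / d ≤ b ∧
    ∃ P : Fin d → Finset ι, IsPartition M P ∧
      ∀ J : Finset (Fin d), J.card = l → t ≤ v (J.biUnion P)}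

/-!
The values total `3 * 97`, so prices proportional to value show that the AnyPrice share is at
most `97`. For the reverse bound, read the items as the edges of `K₆`, labelled so that the star of
every vertex has value `97`. Each edge lies in exactly two of the six stars, so for any prices
summing to `1` the stars cost `2 / 6` on average, and one of them is affordable.

A partition into three bundles of value at least `97` would have all values equal to `97`. The
bundle containing the item of value `65` needs `32` more, which is only possible as `5 + 5 + 5 + 17`
or `7 + 7 + 7 + 11`. It contains no item of value `31`, so another bundle contains two of them and
needs `35` more, which is impossible with either set of remaining items.

The maximin and pessimistic shares agree because an `ℓ`-out-of-`d` partition with `n * ℓ ≤ d` can be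
merged into `n` bundles, each containing `ℓ` of the original ones.
-/

section Partitions

variable {ι : Type*} [DecidableEq ι] {M : Finset ι} {n d : ℕ}

lemma IsPartition.biUnion_eq {A : Fin n → Finset ι} (hA : IsPartition M A) :
    univ.biUnion A = M := by
  ext x
  simp only [mem_biUnion, mem_univ, true_and]
  exact ⟨fun ⟨i, hi⟩ => hA.1 i hi, hA.2.2 x⟩

lemma IsPartition.sum_sum {R : Type*} [AddCommMonoid R] {A : Fin n → Finset ι}
    (hA : IsPartition M A) (f : ι → R) : ∑ i, ∑ x ∈ A i, f x = ∑ x ∈ M, f x := by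
  rw [← hA.biUnion_eq, sum_biUnion fun i _ j _ hij => hA.2.1 i j hij]

lemma IsPartition.sum_card_filter {A : Fin n → Finset ι} (hA : IsPartition M A)
    (q : ι → Prop) [DecidablePred q] : ∑ i, #{x ∈ A i | q x} = #{x ∈ M | q x} := by
  simpa only [card_filter] using hA.sum_sum fun x => if q x then 1 else 0

lemma IsPartition.card_filter_add_card_filter_le {A : Fin n → Finset ι} (hA : IsPartition M A)
    (q : ι → Prop) [DecidablePred q] {i j : Fin n} (hij : i ≠ j) :
    #{x ∈ A i | q x} + #{x ∈ A j | q x} ≤ #{x ∈ M | q x} := by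
  rw [← hA.sum_card_filter, ← sum_pair (f := fun k => #{x ∈ A k | q x}) hij]
  exact sum_le_sum_of_subset (subset_univ _)

lemma IsPartition.biUnion_fiber {P : Fin d → Finset ι} (hP : IsPartition M P)
    (f : Fin d → Fin n) :
    IsPartition M fun i => ({k | f k = i} : Finset (Fin d)).biUnion P := by
  refine ⟨fun i => biUnion_subset.2 fun k _ => hP.1 k, fun i j hij => ?_, fun x hx => ?_⟩
  · simp only [disjoint_biUnion_left, disjoint_biUnion_right, mem_filter, mem_univ, true_and]
    rintro a rfl b rfl
    exact hP.2.1 _ _ fun hab => hij (hab ▸ rfl)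
  · obtain ⟨k, hk⟩ := hP.2.2 x hx
    exact ⟨f k, mem_biUnion.2 ⟨k, by simp, hk⟩⟩

lemma exists_forall_le_card_fiber {α β : Type*} [Fintype α] [Fintype β] [Nonempty β]
    [DecidableEq β] {l : ℕ} (h : Fintype.card β * l ≤ Fintype.card α) :
    ∃ f : α → β, ∀ b, l ≤ #{a | f a = b} := by
  obtain ⟨e⟩ : Nonempty (β × Fin l ↪ α) :=
    Function.Embedding.nonempty_of_card_le (by simpa using h)
  refine ⟨Function.extend e Prod.fst fun _ => Classical.arbitrary β, fun b => ?_⟩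
  have hmem : ∀ k ∈ (univ : Finset (Fin l)),
      e (b, k) ∈ ({a | Function.extend e Prod.fst (fun _ => Classical.arbitrary β) a = b} :
        Finset α) := by
    simp [e.injective.extend_apply]
  simpa using card_le_card_of_injOn (fun k => e (b, k)) hmem fun k _ k' _ hkk' => by
    simpa using hkk'

lemma IsPartition.exists_coarsening [NeZero n] {P : Fin d → Finset ι} (hP : IsPartition M P)
    {l : ℕ} (hld : n * l ≤ d) :
    ∃ A : Fin n → Finset ι, IsPartition M A ∧
      ∀ i, ∃ J : Finset (Fin d), J.card = l ∧ J.biUnion P ⊆ A i := by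
  obtain ⟨f, hf⟩ := exists_forall_le_card_fiber (α := Fin d) (β := Fin n) (by simpa using hld)
  refine ⟨_, hP.biUnion_fiber f, fun i => ?_⟩
  obtain ⟨J, hJ, hJl⟩ := exists_subset_card_eq (hf i)
  exact ⟨J, hJl, biUnion_subset_biUnion_of_subset_left P hJ⟩

end Partitions

section MaximinShare

variable {ι : Type*} [DecidableEq ι] {M : Finset ι} {n : ℕ}

theorem mms_eq_pessimistic [NeZero n] {v : Finset ι → ℝ} (hv : Monotone v) :
    MMS n v M = Pessimistic (1 / n) v M := by
  have hn : (0 : ℝ) < n := by exact_mod_cast Nat.pos_of_neZero n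
  unfold MMS Pessimistic
  congr 1
  ext t
  constructor
  · rintro ⟨A, hA, ht⟩
    refine ⟨1, n, one_pos, Nat.pos_of_neZero n, by simp, A, hA, fun J hJ => ?_⟩
    obtain ⟨i, rfl⟩ := card_eq_one.1 hJ
    simpa using ht i
  · rintro ⟨l, d, -, hd, hld, P, hP, ht⟩
    have hnld : n * l ≤ d := by
      rw [div_le_div_iff₀ (by exact_mod_cast hd) hn, one_mul, mul_comm] at hld
      exact_mod_cast hld
    obtain ⟨A, hA, hJ⟩ := hP.exists_coarsening hnld
    refine ⟨A, hA, fun i => ?_⟩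
    obtain ⟨J, hJl, hJA⟩ := hJ i
    exact (ht J hJl).trans (hv hJA)

lemma mms_sum_natCast_le {w : ι → ℕ} {c : ℕ} (htotal : ∑ x ∈ M, w x = n * (c + 1))
    (h : ∀ A : Fin n → Finset ι, IsPartition M A → ∃ i, ∑ x ∈ A i, w x ≠ c + 1) :
    MMS n (fun S => ∑ x ∈ S, (w x : ℝ)) M ≤ c := by
  refine Real.sSup_le ?_ c.cast_nonneg
  rintro t ⟨A, hA, ht⟩
  by_contra! hct
  have hle : ∀ i ∈ univ, c + 1 ≤ ∑ x ∈ A i, w x := fun i _ => by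
    have : (c : ℝ) < ∑ x ∈ A i, (w x : ℝ) := hct.trans_le (ht i)
    exact_mod_cast this
  have hsum : ∑ _i : Fin n, (c + 1) = ∑ i, ∑ x ∈ A i, w x := by
    rw [hA.sum_sum, htotal, Fin.sum_const, smul_eq_mul]
  obtain ⟨i, hi⟩ := h A hA
  exact hi ((sum_eq_sum_iff_of_le hle).1 hsum i (mem_univ i)).symm

end MaximinShare

section AnyPriceShare

variable {ι : Type*} {M : Finset ι} {b z : ℝ} {v : Finset ι → ℝ}

lemma le_sSup_affordable {p : ι → ℝ} {S : Finset ι} (hSM : S ⊆ M) (hS : ∑ j ∈ S, p j ≤ b) :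
    v S ≤ sSup {u : ℝ | ∃ S, S ⊆ M ∧ (∑ j ∈ S, p j) ≤ b ∧ u = v S} := by
  refine le_csSup (Set.Finite.bddAbove ?_) ⟨S, hSM, hS, rfl⟩
  refine (M.powerset.finite_toSet.image v).subset ?_
  rintro _ ⟨T, hT, -, rfl⟩
  exact ⟨T, mem_coe.2 (mem_powerset.2 hT), rfl⟩

lemma aps_le_of_price (hb : 0 ≤ b) {p : ι → ℝ} (hp : ∀ j ∈ M, 0 ≤ p j)
    (hp_sum : ∑ j ∈ M, p j = 1) (h : ∀ S ⊆ M, ∑ j ∈ S, p j ≤ b → v S ≤ z) :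
    APS b v M ≤ z := by
  refine csInf_le_of_le ⟨v ∅, ?_⟩ ⟨p, hp, hp_sum, rfl⟩ (csSup_le ⟨v ∅, ∅, by simpa using hb⟩ ?_)
  · rintro _ ⟨q, -, -, rfl⟩
    exact le_sSup_affordable (empty_subset M) (by simpa using hb)
  · rintro _ ⟨S, hSM, hS, rfl⟩
    exact h S hSM hS

theorem aps_sum_le_mul_sum (hb : 0 ≤ b) {w : ι → ℝ} (hw : ∀ j ∈ M, 0 ≤ w j)
    (hw_pos : 0 < ∑ j ∈ M, w j) :
    APS b (fun S => ∑ j ∈ S, w j) M ≤ b * ∑ j ∈ M, w j := by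
  refine aps_le_of_price hb (p := fun j => w j / ∑ k ∈ M, w k)
    (fun j hj => div_nonneg (hw j hj) hw_pos.le) ?_ fun S _ hS => ?_
  · rw [← sum_div, div_self hw_pos.ne']
  · rwa [← sum_div, div_le_iff₀ hw_pos] at hS

lemma exists_affordable_of_fractional_cover {κ : Type*} [Fintype κ] [DecidableEq ι]
    {B : κ → Finset ι} {c : κ → ℝ} {p : ι → ℝ} (hBM : ∀ i, B i ⊆ M) (hc : ∀ i, 0 ≤ c i)
    (hc_sum : ∑ i, c i = 1) (hcover : ∀ j ∈ M, ∑ i with j ∈ B i, c i ≤ b)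
    (hp : ∀ j ∈ M, 0 ≤ p j) (hp_sum : ∑ j ∈ M, p j = 1) : ∃ i, ∑ j ∈ B i, p j ≤ b := by
  by_contra! hexpensive
  have havg : b < ∑ i, c i • ∑ j ∈ B i, p j :=
    (convex_Ioi b).sum_mem (fun i _ => hc i) hc_sum fun i _ => hexpensive i
  refine havg.not_ge ?_
  calc ∑ i, c i • ∑ j ∈ B i, p j
      = ∑ i, ∑ j ∈ M with j ∈ B i, c i * p j := by
        simp only [smul_eq_mul, mul_sum, filter_mem_eq_inter, inter_eq_right.2 (hBM _)]
    _ = ∑ j ∈ M, ∑ i with j ∈ B i, c i * p j := sum_comm' (by simp [and_comm])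
    _ ≤ ∑ j ∈ M, b * p j := sum_le_sum fun j hj => by
        rw [← sum_mul]
        exact mul_le_mul_of_nonneg_right (hcover j hj) (hp j hj)
    _ = b := by rw [← mul_sum, hp_sum, mul_one]

theorem le_aps_of_fractional_cover {κ : Type*} [Fintype κ] [DecidableEq ι]
    {B : κ → Finset ι} {c : κ → ℝ} (hM : M.Nonempty) (hBM : ∀ i, B i ⊆ M) (hc : ∀ i, 0 ≤ c i)
    (hc_sum : ∑ i, c i = 1) (hcover : ∀ j ∈ M, ∑ i with j ∈ B i, c i ≤ b)
    (hz : ∀ i, z ≤ v (B i)) : z ≤ APS b v M := by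
  obtain ⟨j₀, hj₀⟩ := hM
  refine le_csInf ⟨_, Pi.single j₀ 1, fun j _ => ?_, by simp [hj₀], rfl⟩ ?_
  · exact (Pi.single_nonneg.2 zero_le_one : (0 : ι → ℝ) ≤ Pi.single j₀ 1) j
  · rintro _ ⟨p, hp, hp_sum, rfl⟩
    obtain ⟨i, hi⟩ := exists_affordable_of_fractional_cover hBM hc hc_sum hcover hp hp_sum
    exact (hz i).trans (le_sSup_affordable (hBM i) hi)

end AnyPriceShare

/-- The item values of the example, as natural numbers so that sums over bundles can be
evaluated by `decide`. -/
def itemValue : Fin 15 → ℕ := ![5, 5, 5, 7, 7, 7, 11, 17, 23, 23, 23, 31, 31, 31, 65]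

lemma natCast_itemValue :
    (![5, 5, 5, 7, 7, 7, 11, 17, 23, 23, 23, 31, 31, 31, 65] : Fin 15 → ℝ) =
      fun j => (itemValue j : ℝ) := by
  funext j
  fin_cases j <;> norm_num [itemValue]

lemma sum_itemValue : ∑ j, itemValue j = 3 * 97 := by decide

/-- The six bundles of value `97` certifying the lower bound on the AnyPrice share: the stars of
the vertices of `K₆` when the items are read as its edges. -/
def starBundle : Fin 6 → Finset (Fin 15) :=
  ![{6, 7, 8, 9, 10}, {0, 3, 8, 11, 12}, {1, 4, 9, 11, 13}, {2, 5, 10, 12, 13},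
    {3, 4, 5, 6, 14}, {0, 1, 2, 7, 14}]

lemma sum_itemValue_starBundle : ∀ i, ∑ j ∈ starBundle i, itemValue j = 97 := by decide

lemma card_starBundle_mem : ∀ j, #{i | j ∈ starBundle i} = 2 := by decide

theorem aps_itemValue : APS (1 / 3) (fun S => ∑ j ∈ S, (itemValue j : ℝ)) univ = 97 := by
  have htotal : ∑ j, (itemValue j : ℝ) = 3 * 97 := by exact_mod_cast sum_itemValue
  apply le_antisymm
  · calc APS (1 / 3) (fun S => ∑ j ∈ S, (itemValue j : ℝ)) univ
        ≤ 1 / 3 * ∑ j, (itemValue j : ℝ) :=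
          aps_sum_le_mul_sum (by norm_num) (fun j _ => Nat.cast_nonneg _) (by norm_num [htotal])
      _ = 97 := by norm_num [htotal]
  · refine le_aps_of_fractional_cover (B := starBundle) (c := fun _ => 1 / 6) univ_nonempty
      (fun i => subset_univ _) (fun _ => by norm_num) (by norm_num) (fun j _ => ?_) fun i => ?_
    · norm_num [card_starBundle_mem]
    · exact_mod_cast (sum_itemValue_starBundle i).ge

/-- The number of items of value `x` in the bundle `S`, by which bundles are compared up to
exchanging items of equal value. -/
def itemCount (S : Finset (Fin 15)) (x : ℕ) : ℕ := #{j ∈ S | itemValue j = x}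

lemma itemCount_mono (x : ℕ) : Monotone fun S => itemCount S x :=
  fun _ _ hST => card_le_card (filter_subset_filter _ hST)

lemma sum_itemValue_eq_itemCount (S : Finset (Fin 15)) :
    ∑ j ∈ S, itemValue j = 5 * itemCount S 5 + 7 * itemCount S 7 + 11 * itemCount S 11 +
      17 * itemCount S 17 + 23 * itemCount S 23 + 31 * itemCount S 31 + 65 * itemCount S 65 := by
  have hvalues : ∀ j ∈ S, itemValue j ∈ ({5, 7, 11, 17, 23, 31, 65} : Finset ℕ) :=
    fun j _ => (by decide : ∀ j, itemValue j ∈ ({5, 7, 11, 17, 23, 31, 65} : Finset ℕ)) j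
  have hfiber (x : ℕ) : ∑ j ∈ S with itemValue j = x, itemValue j = x * itemCount S x := by
    rw [sum_congr rfl fun j hj => (mem_filter.1 hj).2, sum_const, smul_eq_mul, mul_comm, itemCount]
  rw [← sum_fiberwise_of_maps_to hvalues]
  simp [hfiber, add_assoc]

lemma itemCount_of_sum_eq_of_mem {S : Finset (Fin 15)} (hS : ∑ j ∈ S, itemValue j = 97)
    (h14 : 14 ∈ S) :
    itemCount S 31 = 0 ∧ (itemCount S 5 = 3 ∧ itemCount S 17 = 1 ∨
      itemCount S 7 = 3 ∧ itemCount S 11 = 1) := by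
  have h65_pos : 0 < itemCount S 65 := card_pos.2 ⟨14, mem_filter.2 ⟨h14, rfl⟩⟩
  have h5 : itemCount S 5 ≤ 3 := itemCount_mono 5 (subset_univ S)
  have h7 : itemCount S 7 ≤ 3 := itemCount_mono 7 (subset_univ S)
  have h11 : itemCount S 11 ≤ 1 := itemCount_mono 11 (subset_univ S)
  rw [sum_itemValue_eq_itemCount] at hS
  have h65 : itemCount S 65 = 1 := by lia
  have h31 : itemCount S 31 = 0 := by lia
  have h23 : itemCount S 23 = 0 := by lia
  replace hS : 5 * itemCount S 5 + 7 * itemCount S 7 + 11 * itemCount S 11 +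
      17 * itemCount S 17 = 32 := by lia
  exact ⟨h31, by lia⟩

lemma sum_itemValue_ne_of_two_le_itemCount {S : Finset (Fin 15)} (h31 : 2 ≤ itemCount S 31)
    (h : itemCount S 5 = 0 ∧ itemCount S 17 = 0 ∨ itemCount S 7 = 0 ∧ itemCount S 11 = 0) :
    ∑ j ∈ S, itemValue j ≠ 97 := by
  have h5 : itemCount S 5 ≤ 3 := itemCount_mono 5 (subset_univ S)
  have h7 : itemCount S 7 ≤ 3 := itemCount_mono 7 (subset_univ S)
  rw [sum_itemValue_eq_itemCount]
  intro hS
  have h65 : itemCount S 65 = 0 := by lia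
  rcases h with ⟨h5_zero, h17_zero⟩ | ⟨h7_zero, h11_zero⟩
  · have h31_eq : itemCount S 31 = 2 := by lia
    have h23 : itemCount S 23 = 0 := by lia
    replace hS : 7 * itemCount S 7 + 11 * itemCount S 11 = 35 := by lia
    lia
  · have h31_eq : itemCount S 31 = 2 := by lia
    have h23 : itemCount S 23 = 0 := by lia
    replace hS : 5 * itemCount S 5 + 17 * itemCount S 17 = 35 := by lia
    lia

theorem IsPartition.exists_sum_itemValue_ne {A : Fin 3 → Finset (Fin 15)}
    (hA : IsPartition univ A) : ∃ i, ∑ j ∈ A i, itemValue j ≠ 97 := by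
  by_contra! hvalue
  obtain ⟨i, hi⟩ := hA.2.2 14 (mem_univ _)
  obtain ⟨h31, hsmall⟩ := itemCount_of_sum_eq_of_mem (hvalue i) hi
  have hpigeonhole : ∑ k ∈ univ.erase i, 1 < ∑ k ∈ univ.erase i, itemCount (A k) 31 := by
    have hsum : ∑ k, itemCount (A k) 31 = 3 := hA.sum_card_filter _
    rw [sum_erase (f := fun k => itemCount (A k) 31) _ h31, hsum]
    simp
  obtain ⟨k, hk, hk31⟩ := exists_lt_of_sum_lt hpigeonhole
  have hadd (x : ℕ) : itemCount (A i) x + itemCount (A k) x ≤ itemCount univ x :=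
    hA.card_filter_add_card_filter_le _ (ne_of_mem_erase hk).symm
  have hadd5 : itemCount (A i) 5 + itemCount (A k) 5 ≤ 3 := hadd 5
  have hadd7 : itemCount (A i) 7 + itemCount (A k) 7 ≤ 3 := hadd 7
  have hadd11 : itemCount (A i) 11 + itemCount (A k) 11 ≤ 1 := hadd 11
  have hadd17 : itemCount (A i) 17 + itemCount (A k) 17 ≤ 1 := hadd 17
  exact sum_itemValue_ne_of_two_le_itemCount hk31 (by omega) (hvalue k)

theorem mms_itemValue_le : MMS 3 (fun S => ∑ j ∈ S, (itemValue j : ℝ)) univ ≤ 96 :=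
  mms_sum_natCast_le sum_itemValue fun _ hA => hA.exists_sum_itemValue_ne

/-- A concrete instance on 15 items with item values
`5,5,5,7,7,7,11,17,23,23,23,31,31,31,65` for which the AnyPrice share at entitlement
`1/3` equals 97 while the maximin share for 3 agents is at most 96; hence the AnyPrice
share strictly exceeds the maximin share, which equals the pessimistic share. -/
theorem aps_strictly_exceeds_mms_example :
    APS (1 / 3) (fun S => ∑ j ∈ S, (![5, 5, 5, 7, 7, 7, 11, 17, 23, 23, 23, 31, 31, 31, 65] : Fin 15 → ℝ) j) Finset.univ = 97 ∧
    MMS 3 (fun S => ∑ j ∈ S, (![5, 5, 5, 7, 7, 7, 11, 17, 23, 23, 23, 31, 31, 31, 65] : Fin 15 → ℝ) j) Finset.univ ≤ 96 ∧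
    MMS 3 (fun S => ∑ j ∈ S, (![5, 5, 5, 7, 7, 7, 11, 17, 23, 23, 23, 31, 31, 31, 65] : Fin 15 → ℝ) j) Finset.univ
      < APS (1 / 3) (fun S => ∑ j ∈ S, (![5, 5, 5, 7, 7, 7, 11, 17, 23, 23, 23, 31, 31, 31, 65] : Fin 15 → ℝ) j) Finset.univ ∧
    MMS 3 (fun S => ∑ j ∈ S, (![5, 5, 5, 7, 7, 7, 11, 17, 23, 23, 23, 31, 31, 31, 65] : Fin 15 → ℝ) j) Finset.univ
      = Pessimistic (1 / 3) (fun S => ∑ j ∈ S, (![5, 5, 5, 7, 7, 7, 11, 17, 23, 23, 23, 31, 31, 31, 65] : Fin 15 → ℝ) j) Finset.univ := by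
  rw [natCast_itemValue]
  have hmono : Monotone fun S => ∑ j ∈ S, (itemValue j : ℝ) := fun _ _ hST =>
    sum_le_sum_of_subset_of_nonneg hST fun _ _ _ => Nat.cast_nonneg _
  refine ⟨aps_itemValue, mms_itemValue_le, ?_, mms_eq_pessimistic hmono⟩
  rw [aps_itemValue]
  exact mms_itemValue_le.trans_lt (by norm_num)
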